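/- arXiv:1405.3261 — 3 statements merged into one kernel-verified Lean document; each statement's English description precedes it below -/
import Mathlib

section
/- Let Ω ⊂ ℝ^N be a nonempty bounded open set, let J : ℝ^N → [0,∞) be integrable and satisfy the exterior mass condition with constant ν₀ > 0, and let f ∈ C(Ω̄) satisfy f(x) ≥ ϱ₀ for all x ∈ Ω̄, for some ϱ₀ > 0. Then there is no bounded continuous function u : ℝ^N → ℝ with u = 0 on Ωᶜ satisfying −I_J[u](x) = f(x) for every x ∈ Ω. (In other words, any solution of the homogeneous Dirichlet problem for such f must be discontinuous at some point of ∂Ω.) -/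
/-!
A function with values in `[m, ∞)` satisfies `-I_J[u](x) ≤ (∫ J) (u x - m)`. If `-I_J[u] ≥ ρ > 0` on
`Ω` and `u ≥ 0` off `Ω`, then a negative `m = inf u` could be improved by this bound, so `u ≥ 0`;
with `m = 0` the bound then reads `(∫ J) u ≥ ρ` on `Ω`. Hence a solution that vanishes off `Ω` jumps
at every point of `∂Ω`.
-/

open MeasureTheory Metric Set Filter

noncomputable section

/-- The nonlocal operator `I_J[u](x) = ∫ (u(x+z) - u(x)) J(z) dz` associated to an
integrable kernel `J`. -/
def IopJ (N : ℕ) (J u : EuclideanSpace ℝ (Fin N) → ℝ)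
    (x : EuclideanSpace ℝ (Fin N)) : ℝ :=
  ∫ z, (u (x + z) - u x) * J z

/-- The exterior mass condition with constant `ν₀`:
`∫_{Ωᶜ - x} J(z) dz ≥ ν₀` for every `x ∈ Ω̄`. -/
def ExtMass (N : ℕ) (Ω : Set (EuclideanSpace ℝ (Fin N)))
    (J : EuclideanSpace ℝ (Fin N) → ℝ) (ν₀ : ℝ) : Prop :=
  ∀ x ∈ closure Ω, ν₀ ≤ ∫ z in {z | x + z ∉ Ω}, J z

section NonlocalOperator

variable {E : Type*} [Add E] [MeasurableSpace E] [MeasurableAdd E] {μ : Measure E}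
  {J u : E → ℝ} {C m ρ : ℝ} {Ω : Set E}

lemma integrable_increment_mul (hJ : Integrable J μ) (hu : Measurable u) (hC : ∀ y, |u y| ≤ C)
    (x : E) : Integrable (fun z ↦ (u (x + z) - u x) * J z) μ := by
  have hshift : Measurable fun z ↦ u (x + z) := hu.comp (measurable_const_add x)
  refine hJ.bdd_mul (c := C + C) (hshift.sub_const _).aestronglyMeasurable (.of_forall fun z ↦ ?_)
  exact (norm_sub_le _ _).trans (add_le_add (hC _) (hC _))

lemma neg_integral_increment_mul_le (hJ0 : ∀ z, 0 ≤ J z) (hJ : Integrable J μ)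
    (hu : Measurable u) (hC : ∀ y, |u y| ≤ C) (hm : ∀ y, m ≤ u y) (x : E) :
    -∫ z, (u (x + z) - u x) * J z ∂μ ≤ (∫ z, J z ∂μ) * (u x - m) := by
  have hmono : ∫ z, (m - u x) * J z ∂μ ≤ ∫ z, (u (x + z) - u x) * J z ∂μ :=
    integral_mono (hJ.const_mul _) (integrable_increment_mul hJ hu hC x) fun z ↦
      mul_le_mul_of_nonneg_right (sub_le_sub_right (hm _) _) (hJ0 z)
  rw [integral_const_mul] at hmono
  linarith

lemma nonneg_of_le_neg_integral_increment_mul (hJ0 : ∀ z, 0 ≤ J z) (hJ : Integrable J μ)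
    (hu : Measurable u) (hC : ∀ y, |u y| ≤ C) (hρ : 0 < ρ) (hout : ∀ x ∉ Ω, 0 ≤ u x)
    (hsuper : ∀ x ∈ Ω, ρ ≤ -∫ z, (u (x + z) - u x) * J z ∂μ) (x : E) : 0 ≤ u x := by
  by_contra! hx
  have : Nonempty E := ⟨x⟩
  have hbdd : BddBelow (range u) := ⟨-C, forall_mem_range.2 fun y ↦ (abs_le.1 (hC y)).1⟩
  have hinf : ∀ y, ⨅ z, u z ≤ u y := ciInf_le hbdd
  have hgap : ∀ y ∈ Ω, ρ ≤ (∫ z, J z ∂μ) * (u y - ⨅ z, u z) := fun y hy ↦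
    (hsuper y hy).trans (neg_integral_increment_mul_le hJ0 hJ hu hC hinf y)
  have hxΩ : x ∈ Ω := by
    by_contra h
    exact hx.not_ge (hout x h)
  have hmass : 0 < ∫ z, J z ∂μ :=
    pos_of_mul_pos_left (hρ.trans_le (hgap x hxΩ)) (sub_nonneg.2 (hinf x))
  have himproved : ∀ y, min 0 ((⨅ z, u z) + ρ / ∫ z, J z ∂μ) ≤ u y := by
    intro y
    by_cases hy : y ∈ Ω
    · have : ρ / ∫ z, J z ∂μ ≤ u y - ⨅ z, u z := (div_le_iff₀' hmass).2 (hgap y hy)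
      exact (min_le_right _ _).trans (by linarith)
    · exact (min_le_left _ _).trans (hout y hy)
  have hneg : ⨅ z, u z < 0 := (hinf x).trans_lt hx
  have hstep : 0 < ρ / ∫ z, J z ∂μ := div_pos hρ hmass
  exact (le_ciInf himproved).not_gt (lt_min hneg (by linarith))

lemma le_integral_mul_of_le_neg_integral_increment_mul (hJ0 : ∀ z, 0 ≤ J z)
    (hJ : Integrable J μ) (hu : Measurable u) (hC : ∀ y, |u y| ≤ C) (hρ : 0 < ρ)
    (hout : ∀ x ∉ Ω, 0 ≤ u x)
    (hsuper : ∀ x ∈ Ω, ρ ≤ -∫ z, (u (x + z) - u x) * J z ∂μ) :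
    ∀ x ∈ Ω, ρ ≤ (∫ z, J z ∂μ) * u x := by
  intro x hx
  have hnonneg := nonneg_of_le_neg_integral_increment_mul hJ0 hJ hu hC hρ hout hsuper
  simpa only [sub_zero] using
    (hsuper x hx).trans (neg_integral_increment_mul_le hJ0 hJ hu hC hnonneg x)

end NonlocalOperator

lemma not_continuousAt_of_mem_frontier {X : Type*} [TopologicalSpace X] {g : X → ℝ} {s : Set X}
    {a b : ℝ} (hab : a < b) (hin : ∀ x ∈ s, b ≤ g x) (hout : ∀ x ∉ s, g x ≤ a) {x : X}
    (hx : x ∈ frontier s) : ¬ ContinuousAt g x := by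
  intro hg
  rw [frontier_eq_closure_inter_closure] at hx
  have hb : b ≤ g x :=
    continuousWithinAt_const.closure_le hx.1 hg.continuousWithinAt hin
  have ha : g x ≤ a :=
    hg.continuousWithinAt.closure_le hx.2 continuousWithinAt_const hout
  exact (ha.trans_lt hab).not_ge hb

lemma nonempty_frontier_of_isBounded {V : Type*} [NormedAddCommGroup V] [NormedSpace ℝ V]
    [Nontrivial V] {s : Set V} (hs : s.Nonempty) (hb : Bornology.IsBounded s) :
    (frontier s).Nonempty := by
  refine nonempty_frontier_iff.2 ⟨hs, ?_⟩
  rintro rfl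
  exact NormedSpace.unbounded_univ ℝ V hb

theorem statement10_general {E : Type*} [Add E] [TopologicalSpace E] [MeasurableSpace E]
    [MeasurableAdd E] {μ : Measure E} {Ω : Set E} {J u : E → ℝ} {C ρ : ℝ}
    (hJ0 : ∀ z, 0 ≤ J z) (hJ : Integrable J μ) (hu : Measurable u) (hC : ∀ y, |u y| ≤ C)
    (hρ : 0 < ρ) (hout : ∀ x ∉ Ω, u x = 0)
    (hsuper : ∀ x ∈ Ω, ρ ≤ -∫ z, (u (x + z) - u x) * J z ∂μ) :
    ∀ x ∈ frontier Ω, ¬ ContinuousAt u x := by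
  intro x hx hcont
  have hlower := le_integral_mul_of_le_neg_integral_increment_mul hJ0 hJ hu hC hρ
    (fun y hy ↦ (hout y hy).ge) hsuper
  have hzero : ∀ y ∉ Ω, (∫ z, J z ∂μ) * u y ≤ 0 := fun y hy ↦ by rw [hout y hy, mul_zero]
  exact not_continuousAt_of_mem_frontier hρ hlower hzero hx (hcont.const_mul _)

/-- for a strictly positive right-hand side there is no bounded
continuous (on all of `ℝ^N`) solution of the homogeneous Dirichlet problem. -/
theorem statement10 (N : ℕ) (hN : 1 ≤ N)
    (Ω : Set (EuclideanSpace ℝ (Fin N))) (hΩo : IsOpen Ω) (hΩb : Bornology.IsBounded Ω)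
    (hΩne : Ω.Nonempty)
    (J : EuclideanSpace ℝ (Fin N) → ℝ) (hJ0 : ∀ z, 0 ≤ J z) (hJint : Integrable J)
    (ν₀ : ℝ) (hν₀ : 0 < ν₀) (hext : ExtMass N Ω J ν₀)
    (f : EuclideanSpace ℝ (Fin N) → ℝ) (hf : ContinuousOn f (closure Ω))
    (ϱ₀ : ℝ) (hϱ₀ : 0 < ϱ₀) (hfpos : ∀ x ∈ closure Ω, ϱ₀ ≤ f x) :
    ¬ ∃ u : EuclideanSpace ℝ (Fin N) → ℝ,
        (∃ C, ∀ x, |u x| ≤ C) ∧ Continuous u ∧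
          (∀ x, x ∉ Ω → u x = 0) ∧ ∀ x ∈ Ω, -IopJ N J u x = f x := by
  rintro ⟨u, ⟨C, hC⟩, hu, hu0, heq⟩
  have : Nonempty (Fin N) := ⟨⟨0, hN⟩⟩
  obtain ⟨x, hx⟩ := nonempty_frontier_of_isBounded hΩne hΩb
  exact statement10_general hJ0 hJint hu.measurable hC hϱ₀ hu0
    (fun y hy ↦ (hfpos y (subset_closure hy)).trans_eq (heq y hy).symm) x hx hu.continuousAt
end
end

section
/- Let Ω ⊂ ℝ^N be a nonempty bounded open set and R = diam(Ω). Then for every ε ∈ (0,1) and every x ∈ Ω̄, ∫_{Ωᶜ − x} K_ε(z) dz ≥ N·Vol(B₁)·(R + 1)^{−2σ}/(4σ), where Vol(B₁) is the Lebesgue measure of the unit ball of ℝ^N. In particular, the indicator function χ = 1_{Ω̄} satisfies −I_ε[χ](x) ≥ N·Vol(B₁)·(R + 1)^{−2σ}/(4σ) for every x ∈ Ω̄ and every ε ∈ (0,1). -/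
/-!
A point `x + z` with `x ∈ Ω̄` and `|z| > r ≥ diam Ω` lies outside `Ω̄`, so the exterior mass of
`K_ε` dominates its integral over `{|z| > r}`. If moreover `ε ≤ r`, then
`ε ^ (N + 2σ) ≤ |z| ^ (N + 2σ)` there, hence `K_ε(z) ≥ |z| ^ (-(N + 2σ)) / 2`, and the latter is
integrated in polar coordinates. For `x ∈ Ω̄` the quantity `-I_ε[1_Ω̄](x)` is itself the mass of
`K_ε` exterior to `Ω̄`.
-/

open MeasureTheory Metric Set Filter

noncomputable section

/-- The zero-order kernel `K_ε(z) = 1/(ε^{N+2σ} + |z|^{N+2σ})`. -/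
def Kker (N : ℕ) (σ ε : ℝ) (z : EuclideanSpace ℝ (Fin N)) : ℝ :=
  1 / (ε ^ ((N : ℝ) + 2 * σ) + ‖z‖ ^ ((N : ℝ) + 2 * σ))

/-- The zero-order nonlocal operator `I_ε[u](x) = ∫ (u(x+z) - u(x)) K_ε(z) dz`. -/
def Iop (N : ℕ) (σ ε : ℝ) (u : EuclideanSpace ℝ (Fin N) → ℝ)
    (x : EuclideanSpace ℝ (Fin N)) : ℝ :=
  ∫ z, (u (x + z) - u x) * Kker N σ ε z

open Classical in
/-- The signed distance to the boundary of `Ω`. -/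
def sdist (N : ℕ) (Ω : Set (EuclideanSpace ℝ (Fin N))) (x : EuclideanSpace ℝ (Fin N)) : ℝ :=
  if x ∈ closure Ω then Metric.infDist x (frontier Ω) else -Metric.infDist x (frontier Ω)

/-- `Ω` has `C²` boundary with parameter `δ₀`: the boundary is nonempty and the signed
distance is `C²` on the strip `{|d| < δ₀}`. -/
def HasC2Boundary (N : ℕ) (Ω : Set (EuclideanSpace ℝ (Fin N))) (δ₀ : ℝ) : Prop :=
  (frontier Ω).Nonempty ∧ 0 < δ₀ ∧
    ContDiffOn ℝ 2 (sdist N Ω) {x | |sdist N Ω x| < δ₀}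

/-- A modulus of continuity: nonnegative, nondecreasing on `[0,∞)`, vanishing and
continuous at `0`. -/
def IsModulus (m : ℝ → ℝ) : Prop :=
  (∀ t, 0 ≤ m t) ∧ MonotoneOn m (Set.Ici (0 : ℝ)) ∧ m 0 = 0 ∧ ContinuousAt m 0

/-- A (pointwise) solution of the Dirichlet problem `-I_ε[u] = f` in `Ω`, `u = 0` in `Ωᶜ`:
a bounded measurable function, continuous in `Ω`, vanishing outside `Ω`, solving the
equation pointwise in `Ω`. -/
def IsSolution (N : ℕ) (σ : ℝ) (Ω : Set (EuclideanSpace ℝ (Fin N)))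
    (f : EuclideanSpace ℝ (Fin N) → ℝ) (ε : ℝ)
    (u : EuclideanSpace ℝ (Fin N) → ℝ) : Prop :=
  Measurable u ∧ (∃ C, ∀ x, |u x| ≤ C) ∧ ContinuousOn u Ω ∧
    (∀ x, x ∉ Ω → u x = 0) ∧ ∀ x ∈ Ω, -Iop N σ ε u x = f x

section Seminormed

variable {E : Type*} [SeminormedAddCommGroup E]

lemma indicator_compl_closedBall_fun_norm {F : Type*} [Zero F] (f : ℝ → F) (r : ℝ) :
    (closedBall (0 : E) r)ᶜ.indicator (fun x ↦ f ‖x‖) = fun x ↦ (Ioi r).indicator f ‖x‖ := by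
  ext x
  by_cases hx : r < ‖x‖ <;> simp [hx]

lemma setOf_add_mem_subset_closedBall {A : Set E} (hA : Bornology.IsBounded A) {x : E}
    (hx : x ∈ A) {r : ℝ} (hr : diam A ≤ r) : {z | x + z ∈ A} ⊆ closedBall 0 r := by
  intro z hz
  rw [mem_closedBall_zero_iff, ← dist_self_add_left z x]
  exact (dist_le_diam_of_mem hA hz hx).trans hr

end Seminormed

lemma pow_pred_smul_rpow_neg {n : ℕ} (hn : 0 < n) (p : ℝ) {y : ℝ} (hy : 0 < y) :
    y ^ (n - 1) • y ^ (-p) = y ^ (n - p - 1) := by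
  rw [smul_eq_mul, ← Real.rpow_natCast, ← Real.rpow_add hy, Nat.cast_pred hn]
  ring_nf

section Radial

variable {E F : Type*} [NormedAddCommGroup E] [NormedSpace ℝ E] [FiniteDimensional ℝ E]
  [MeasurableSpace E] [BorelSpace E] (μ : Measure E) [μ.IsAddHaarMeasure]
  [NormedAddCommGroup F] [NormedSpace ℝ F]

lemma integrableOn_compl_closedBall_fun_norm_iff [Nontrivial E] {f : ℝ → F} {r : ℝ} (hr : 0 ≤ r) :
    IntegrableOn (fun x : E ↦ f ‖x‖) (closedBall 0 r)ᶜ μ ↔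
      IntegrableOn (fun y ↦ y ^ (Module.finrank ℝ E - 1) • f y) (Ioi r) := by
  rw [← integrable_indicator_iff measurableSet_closedBall.compl,
    indicator_compl_closedBall_fun_norm, integrable_fun_norm_addHaar, ← indicator_smul,
    integrableOn_indicator_iff measurableSet_Ioi, inter_eq_self_of_subset_left (Ioi_subset_Ioi hr)]

lemma setIntegral_compl_closedBall_fun_norm [Nontrivial E] (f : ℝ → F) {r : ℝ} (hr : 0 ≤ r) :
    ∫ x in (closedBall (0 : E) r)ᶜ, f ‖x‖ ∂μ = Module.finrank ℝ E • μ.real (ball 0 1) •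
      ∫ y in Ioi r, y ^ (Module.finrank ℝ E - 1) • f y := by
  rw [← integral_indicator measurableSet_closedBall.compl, indicator_compl_closedBall_fun_norm,
    integral_fun_norm_addHaar, ← indicator_smul, setIntegral_indicator measurableSet_Ioi,
    inter_eq_self_of_subset_right (Ioi_subset_Ioi hr)]

lemma integrableOn_norm_rpow_neg_compl_closedBall {p r : ℝ} (hp : Module.finrank ℝ E < p)
    (hr : 0 < r) : IntegrableOn (fun x : E ↦ ‖x‖ ^ (-p)) (closedBall 0 r)ᶜ μ := by
  obtain _ | _ := subsingleton_or_nontrivial E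
  · simp only [Subsingleton.eq_univ_of_nonempty (nonempty_closedBall.2 hr.le), compl_univ,
      integrableOn_empty]
  rw [integrableOn_compl_closedBall_fun_norm_iff μ (f := (· ^ (-p))) hr.le]
  refine (integrableOn_Ioi_rpow_of_lt (a := Module.finrank ℝ E - p - 1) (by linarith) hr).congr_fun
    (fun y hy ↦ ?_) measurableSet_Ioi
  exact (pow_pred_smul_rpow_neg Module.finrank_pos p (hr.trans hy)).symm

lemma setIntegral_norm_rpow_neg_compl_closedBall {p r : ℝ} (hp : Module.finrank ℝ E < p)
    (hr : 0 < r) :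
    ∫ x in (closedBall (0 : E) r)ᶜ, ‖x‖ ^ (-p) ∂μ = Module.finrank ℝ E * μ.real (ball 0 1) *
      (r ^ (Module.finrank ℝ E - p) / (p - Module.finrank ℝ E)) := by
  obtain _ | _ := subsingleton_or_nontrivial E
  · simp only [Subsingleton.eq_univ_of_nonempty (nonempty_closedBall.2 hr.le), compl_univ,
      setIntegral_empty, Module.finrank_zero_of_subsingleton, Nat.cast_zero, zero_mul]
  rw [setIntegral_compl_closedBall_fun_norm μ (· ^ (-p)) hr.le,
    setIntegral_congr_fun measurableSet_Ioi fun y hy ↦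
      pow_pred_smul_rpow_neg Module.finrank_pos p (hr.trans hy),
    integral_Ioi_rpow_of_lt (by linarith) hr, sub_add_cancel, nsmul_eq_mul, smul_eq_mul, mul_assoc,
    neg_div, ← div_neg, neg_sub]

end Radial

section Kernel

variable {N : ℕ} {σ ε r : ℝ}

lemma Kker_nonneg (σ : ℝ) (hε : 0 ≤ ε) (z : EuclideanSpace ℝ (Fin N)) : 0 ≤ Kker N σ ε z := by
  unfold Kker
  positivity

lemma continuous_Kker (hp : 0 ≤ N + 2 * σ) (hε : 0 < ε) : Continuous (Kker N σ ε) := by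
  unfold Kker
  refine continuous_const.div (continuous_const.add <|
    continuous_norm.rpow_const fun _ ↦ .inr hp) fun z ↦ ?_
  positivity

lemma Kker_le_norm_rpow_neg (σ : ℝ) (hε : 0 ≤ ε) {z : EuclideanSpace ℝ (Fin N)} (hz : z ≠ 0) :
    Kker N σ ε z ≤ ‖z‖ ^ (-(N + 2 * σ)) := by
  have hz' : 0 < ‖z‖ := norm_pos_iff.2 hz
  rw [Real.rpow_neg hz'.le, ← one_div, Kker]
  gcongr
  exact le_add_of_nonneg_left (by positivity)

lemma norm_rpow_neg_le_two_mul_Kker (hp : 0 ≤ N + 2 * σ) (hε : 0 < ε)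
    {z : EuclideanSpace ℝ (Fin N)} (hz : ε ≤ ‖z‖) :
    ‖z‖ ^ (-(N + 2 * σ)) ≤ 2 * Kker N σ ε z := by
  have hz' : 0 < ‖z‖ := hε.trans_le hz
  have hpow : ε ^ (N + 2 * σ) ≤ ‖z‖ ^ (N + 2 * σ) := Real.rpow_le_rpow hε.le hz hp
  rw [Kker, Real.rpow_neg hz'.le, mul_one_div, inv_eq_one_div,
    div_le_div_iff₀ (by positivity) (by positivity)]
  linarith

lemma integrable_Kker (hσ : 0 < σ) (hε : 0 < ε) : Integrable (Kker N σ ε) := by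
  have hcont : Continuous (Kker N σ ε) := continuous_Kker (by positivity) hε
  have hball : IntegrableOn (Kker N σ ε) (closedBall 0 1) :=
    hcont.continuousOn.integrableOn_compact (isCompact_closedBall 0 1)
  have hpower : IntegrableOn (fun z : EuclideanSpace ℝ (Fin N) ↦ ‖z‖ ^ (-(N + 2 * σ)))
      (closedBall 0 1)ᶜ :=
    integrableOn_norm_rpow_neg_compl_closedBall volume
      (by rw [finrank_euclideanSpace_fin]; linarith) one_pos
  have htail : IntegrableOn (Kker N σ ε) (closedBall 0 1)ᶜ := by
    refine hpower.mono' hcont.aestronglyMeasurable <|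
      (ae_restrict_mem measurableSet_closedBall.compl).mono fun z hz ↦ ?_
    rw [Real.norm_of_nonneg (Kker_nonneg σ hε.le z)]
    refine Kker_le_norm_rpow_neg σ hε.le ?_
    rintro rfl
    exact hz (mem_closedBall_self zero_le_one)
  simpa only [union_compl_self, integrableOn_univ] using hball.union htail

lemma le_setIntegral_Kker_compl_closedBall (hσ : 0 < σ) (hε : 0 < ε) (hεr : ε ≤ r) :
    N * (volume (ball (0 : EuclideanSpace ℝ (Fin N)) 1)).toReal * r ^ (-(2 * σ)) / (4 * σ) ≤
      ∫ z in (closedBall 0 r)ᶜ, Kker N σ ε z := by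
  have hr : 0 < r := hε.trans_le hεr
  have hp : (Module.finrank ℝ (EuclideanSpace ℝ (Fin N)) : ℝ) < N + 2 * σ := by
    rw [finrank_euclideanSpace_fin]
    linarith
  have hle : ∫ z : EuclideanSpace ℝ (Fin N) in (closedBall 0 r)ᶜ, ‖z‖ ^ (-(N + 2 * σ)) ≤
      ∫ z in (closedBall 0 r)ᶜ, 2 * Kker N σ ε z :=
    setIntegral_mono_on (integrableOn_norm_rpow_neg_compl_closedBall volume hp hr)
      ((integrable_Kker hσ hε).const_mul 2).integrableOn measurableSet_closedBall.compl
      fun z hz ↦ norm_rpow_neg_le_two_mul_Kker (by positivity) hε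
        (hεr.trans <| le_of_not_ge fun h ↦ hz (mem_closedBall_zero_iff.2 h))
  rw [integral_const_mul] at hle
  calc
    _ = (∫ z : EuclideanSpace ℝ (Fin N) in (closedBall 0 r)ᶜ, ‖z‖ ^ (-(N + 2 * σ))) / 2 := by
      rw [setIntegral_norm_rpow_neg_compl_closedBall volume hp hr, finrank_euclideanSpace_fin,
        sub_add_cancel_left, add_sub_cancel_left, measureReal_def]
      ring
    _ ≤ _ := by linarith

lemma le_setIntegral_Kker_of_compl_subset_closedBall (hσ : 0 < σ) (hε : 0 < ε) (hεr : ε ≤ r)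
    {S : Set (EuclideanSpace ℝ (Fin N))} (hS : Sᶜ ⊆ closedBall 0 r) :
    N * (volume (ball (0 : EuclideanSpace ℝ (Fin N)) 1)).toReal * r ^ (-(2 * σ)) / (4 * σ) ≤
      ∫ z in S, Kker N σ ε z :=
  (le_setIntegral_Kker_compl_closedBall hσ hε hεr).trans <|
    setIntegral_mono_set (integrable_Kker hσ hε).integrableOn
      (ae_of_all _ (Kker_nonneg σ hε.le)) (compl_subset_comm.1 hS).eventuallyLE

lemma neg_Iop_indicator_one (N : ℕ) (σ ε : ℝ) {A : Set (EuclideanSpace ℝ (Fin N))}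
    (hA : MeasurableSet A) {x : EuclideanSpace ℝ (Fin N)} (hx : x ∈ A) :
    -Iop N σ ε (A.indicator fun _ ↦ 1) x = ∫ z in {z | x + z ∉ A}, Kker N σ ε z := by
  have hmeas : MeasurableSet {z | x + z ∉ A} := measurable_const_add x hA.compl
  rw [Iop, ← integral_neg, ← integral_indicator hmeas]
  congr 1 with z
  by_cases hz : x + z ∈ A <;> simp [hz, hx]

end Kernel

theorem statement14_general {N : ℕ} {σ ε r : ℝ} (hσ : 0 < σ) (hε : 0 < ε) (hεr : ε ≤ r)
    {Ω : Set (EuclideanSpace ℝ (Fin N))} (hΩb : Bornology.IsBounded Ω) (hΩr : diam Ω ≤ r)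
    {x : EuclideanSpace ℝ (Fin N)} (hx : x ∈ closure Ω) :
    N * (volume (ball (0 : EuclideanSpace ℝ (Fin N)) 1)).toReal * r ^ (-(2 * σ)) / (4 * σ) ≤
        ∫ z in {z | x + z ∉ Ω}, Kker N σ ε z ∧
      N * (volume (ball (0 : EuclideanSpace ℝ (Fin N)) 1)).toReal * r ^ (-(2 * σ)) / (4 * σ) ≤
        -Iop N σ ε ((closure Ω).indicator fun _ ↦ 1) x := by
  have hball : {z | x + z ∈ closure Ω} ⊆ closedBall 0 r :=
    setOf_add_mem_subset_closedBall hΩb.closure hx ((diam_closure Ω).trans_le hΩr)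
  constructor
  · refine le_setIntegral_Kker_of_compl_subset_closedBall hσ hε hεr fun z hz ↦ hball ?_
    exact subset_closure (not_not.1 hz)
  · rw [neg_Iop_indicator_one N σ ε isClosed_closure.measurableSet hx]
    exact le_setIntegral_Kker_of_compl_subset_closedBall hσ hε hεr fun z hz ↦ hball (not_not.1 hz)

/-- a uniform lower bound for the exterior mass of `K_ε`, and the
resulting supersolution property of the indicator of `Ω̄`. -/
theorem statement14 (N : ℕ) (hN : 1 ≤ N) (σ : ℝ) (hσ : σ ∈ Set.Ioo (0 : ℝ) 1)
    (Ω : Set (EuclideanSpace ℝ (Fin N))) (hΩo : IsOpen Ω) (hΩb : Bornology.IsBounded Ω)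
    (hΩne : Ω.Nonempty) :
    ∀ ε ∈ Set.Ioo (0 : ℝ) 1, ∀ x ∈ closure Ω,
      (N : ℝ) * (volume (Metric.ball (0 : EuclideanSpace ℝ (Fin N)) 1)).toReal *
            (Metric.diam Ω + 1) ^ (-(2 * σ)) / (4 * σ) ≤
          ∫ z in {z | x + z ∉ Ω}, Kker N σ ε z ∧
        (N : ℝ) * (volume (Metric.ball (0 : EuclideanSpace ℝ (Fin N)) 1)).toReal *
            (Metric.diam Ω + 1) ^ (-(2 * σ)) / (4 * σ) ≤
          -Iop N σ ε (Set.indicator (closure Ω) fun _ => (1 : ℝ)) x := by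
  intro ε hε x hx
  exact statement14_general hσ.1 hε.1 (by linarith [hε.2, diam_nonneg (s := Ω)]) hΩb
    (le_add_of_nonneg_right zero_le_one) hx
end
end

section
/- Let σ ∈ (0,1), β₀ ∈ (0, min{1, 2σ}) and α ∈ (0, β₀). Then there exists a constant C > 0, depending only on σ, β₀ and α, such that for all ε ∈ (0,1], all r ∈ (0,1] and all d > r, (ε + r)^{β₀} · ∫_{d−r}^{d+r} (ε^{1+2σ} + |s|^{1+2σ})^{−1} ds ≤ C · r^{α} · (ε + d − r)^{−2σ}. -/
open MeasureTheory Metric Set Filter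

noncomputable section

/-!
By convexity of `x ↦ x ^ p`, where `p = 1 + 2σ`, the integral is at most a constant times
`J = ∫ x in a..b, x ^ (-p)`, where `a = ε + d - r` and `b = ε + d + r`. Bounding the integrand by
its value at `a` gives `a * J ≤ (b - a) * a ^ (1 - p)`, and integrating up to infinity gives
`(b - a) * J ≤ (b - a) * a ^ (1 - p) / (p - 1)`. Adding the two controls `b * J`, and multiplying
by `b ^ (β - 1) ≤ (b - a) ^ (β - 1)` yields the estimate, because `ε + r ≤ b` and `b - a = 2 * r`.
-/

section PowerIntegral

variable {p a b : ℝ}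

theorem integral_rpow_neg_le_sub_mul (hp : 0 ≤ p) (ha : 0 < a) (hab : a ≤ b) :
    ∫ x in a..b, x ^ (-p) ≤ (b - a) * a ^ (-p) := by
  have hbound : ∀ x ∈ Set.uIoc a b, ‖x ^ (-p)‖ ≤ a ^ (-p) := by
    intro x hx
    rw [uIoc_of_le hab] at hx
    rw [Real.norm_of_nonneg (Real.rpow_nonneg (ha.trans hx.1).le _)]
    exact Real.rpow_le_rpow_of_nonpos ha hx.1.le (neg_nonpos.2 hp)
  calc ∫ x in a..b, x ^ (-p) ≤ ‖∫ x in a..b, x ^ (-p)‖ := Real.le_norm_self _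
    _ ≤ a ^ (-p) * |b - a| := intervalIntegral.norm_integral_le_of_norm_le_const hbound
    _ = (b - a) * a ^ (-p) := by rw [abs_of_nonneg (sub_nonneg.2 hab), mul_comm]

theorem integral_rpow_neg_le_rpow_div (hp : 1 < p) (ha : 0 < a) (hab : a ≤ b) :
    ∫ x in a..b, x ^ (-p) ≤ a ^ (1 - p) / (p - 1) := by
  calc ∫ x in a..b, x ^ (-p) = (b ^ (-p + 1) - a ^ (-p + 1)) / (-p + 1) :=
        integral_rpow (.inr ⟨by linarith, notMem_uIcc_of_lt ha (ha.trans_le hab)⟩)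
    _ = (a ^ (1 - p) - b ^ (1 - p)) / (p - 1) := by
        rw [← neg_div_neg_eq, neg_sub, neg_add_eq_sub, neg_sub]
    _ ≤ a ^ (1 - p) / (p - 1) := by
        have hb : 0 ≤ b := ha.le.trans hab
        exact div_le_div_of_nonneg_right (sub_le_self _ (Real.rpow_nonneg hb _))
          (sub_nonneg.2 hp.le)

theorem mul_integral_rpow_neg_le (hp : 1 < p) (ha : 0 < a) (hab : a ≤ b) :
    b * ∫ x in a..b, x ^ (-p) ≤ (1 + 1 / (p - 1)) * (b - a) * a ^ (1 - p) := by
  have hshort := integral_rpow_neg_le_sub_mul (by linarith : 0 ≤ p) ha hab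
  have htail := integral_rpow_neg_le_rpow_div hp ha hab
  calc b * ∫ x in a..b, x ^ (-p)
      = a * (∫ x in a..b, x ^ (-p)) + (b - a) * ∫ x in a..b, x ^ (-p) := by ring
    _ ≤ a * ((b - a) * a ^ (-p)) + (b - a) * (a ^ (1 - p) / (p - 1)) :=
        add_le_add (mul_le_mul_of_nonneg_left hshort ha.le)
          (mul_le_mul_of_nonneg_left htail (sub_nonneg.2 hab))
    _ = (1 + 1 / (p - 1)) * (b - a) * a ^ (1 - p) := by
        rw [sub_eq_add_neg 1 p, Real.rpow_add ha, Real.rpow_one]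
        ring

theorem rpow_mul_integral_rpow_neg_le {β : ℝ} (hp : 1 < p) (hβ : β ≤ 1) (ha : 0 < a)
    (hab : a < b) :
    b ^ β * ∫ x in a..b, x ^ (-p) ≤ (1 + 1 / (p - 1)) * (b - a) ^ β * a ^ (1 - p) := by
  have hb : 0 < b := ha.trans hab
  have hlength : 0 < b - a := sub_pos.2 hab
  have : 0 < p - 1 := sub_pos.2 hp
  have hrpow : b ^ (β - 1) ≤ (b - a) ^ (β - 1) :=
    Real.rpow_le_rpow_of_nonpos hlength (by linarith) (by linarith)
  calc b ^ β * ∫ x in a..b, x ^ (-p)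
      = b ^ (β - 1) * (b * ∫ x in a..b, x ^ (-p)) := by
        rw [← mul_assoc, ← Real.rpow_add_one hb.ne', sub_add_cancel]
    _ ≤ b ^ (β - 1) * ((1 + 1 / (p - 1)) * (b - a) * a ^ (1 - p)) := by
        gcongr ?_ * ?_
        exact mul_integral_rpow_neg_le hp ha hab.le
    _ ≤ (b - a) ^ (β - 1) * ((1 + 1 / (p - 1)) * (b - a) * a ^ (1 - p)) := by gcongr
    _ = (1 + 1 / (p - 1)) * ((b - a) ^ (β - 1) * (b - a)) * a ^ (1 - p) := by ring
    _ = (1 + 1 / (p - 1)) * (b - a) ^ β * a ^ (1 - p) := by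
        rw [← Real.rpow_add_one hlength.ne', sub_add_cancel]

end PowerIntegral

section Kernel

variable {p ε : ℝ}

theorem inv_rpow_add_rpow_le {s : ℝ} (hp : 1 ≤ p) (hε : 0 < ε) (hs : 0 ≤ s) :
    (ε ^ p + s ^ p)⁻¹ ≤ 2 ^ (p - 1) * (ε + s) ^ (-p) := by
  have hconvex : (ε + s) ^ p ≤ 2 ^ (p - 1) * (ε ^ p + s ^ p) := by
    lift ε to NNReal using hε.le
    lift s to NNReal using hs
    exact_mod_cast NNReal.rpow_add_le_mul_rpow_add_rpow ε s hp
  rw [Real.rpow_neg (by positivity), ← div_eq_mul_inv, le_div_iff₀ (by positivity),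
    inv_mul_le_iff₀ (by positivity), mul_comm]
  exact hconvex

theorem setIntegral_Icc_inv_rpow_add_abs_rpow_le {u v : ℝ} (hp : 1 ≤ p) (hε : 0 < ε) (hu : 0 ≤ u)
    (huv : u ≤ v) :
    ∫ s in Icc u v, (ε ^ p + |s| ^ p)⁻¹ ≤ 2 ^ (p - 1) * ∫ x in (ε + u)..(ε + v), x ^ (-p) := by
  have hkernel : IntervalIntegrable (fun s : ℝ ↦ (ε ^ p + |s| ^ p)⁻¹) volume u v := by
    refine (Continuous.inv₀ ?_ fun s ↦ by positivity).intervalIntegrable u v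
    exact continuous_const.add (continuous_abs.rpow_const fun _ ↦ .inr (by linarith))
  have hpower : IntervalIntegrable (fun s : ℝ ↦ (ε + s) ^ (-p)) volume u v := by
    refine ContinuousOn.intervalIntegrable_of_Icc huv (.rpow_const (by fun_prop) fun s hs ↦ .inl ?_)
    linarith [hs.1]
  calc ∫ s in Icc u v, (ε ^ p + |s| ^ p)⁻¹
      = ∫ s in u..v, (ε ^ p + |s| ^ p)⁻¹ := by
        rw [integral_Icc_eq_integral_Ioc, intervalIntegral.integral_of_le huv]
    _ ≤ ∫ s in u..v, 2 ^ (p - 1) * (ε + s) ^ (-p) := by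
        refine intervalIntegral.integral_mono_on huv hkernel (hpower.const_mul _) fun s hs ↦ ?_
        have hs₀ : 0 ≤ s := hu.trans hs.1
        simpa only [abs_of_nonneg hs₀] using inv_rpow_add_rpow_le hp hε hs₀
    _ = 2 ^ (p - 1) * ∫ x in (ε + u)..(ε + v), x ^ (-p) := by
        rw [intervalIntegral.integral_const_mul,
          intervalIntegral.integral_comp_add_left (fun x : ℝ ↦ x ^ (-p))]

end Kernel

theorem statement16_general {σ β ε r d : ℝ} (hσ : 0 < σ) (hβ₀ : 0 ≤ β) (hβ₁ : β ≤ 1) (hε : 0 < ε)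
    (hr : 0 < r) (hd : r ≤ d) :
    (ε + r) ^ β * ∫ s in Icc (d - r) (d + r), (ε ^ (1 + 2 * σ) + |s| ^ (1 + 2 * σ))⁻¹ ≤
      2 ^ (2 * σ + β) * (1 + 1 / (2 * σ)) * r ^ β * (ε + d - r) ^ (-(2 * σ)) := by
  have hkernel : ∫ s in Icc (d - r) (d + r), (ε ^ (1 + 2 * σ) + |s| ^ (1 + 2 * σ))⁻¹ ≤
      2 ^ (2 * σ) * ∫ x in (ε + d - r)..(ε + d + r), x ^ (-(1 + 2 * σ)) := by
    simpa only [← add_sub_assoc, ← add_assoc, add_sub_cancel_left] using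
      setIntegral_Icc_inv_rpow_add_abs_rpow_le (p := 1 + 2 * σ) (by linarith) hε
        (sub_nonneg.2 hd) (by linarith : d - r ≤ d + r)
  have hpower : (ε + d + r) ^ β * ∫ x in (ε + d - r)..(ε + d + r), x ^ (-(1 + 2 * σ)) ≤
      (1 + 1 / (2 * σ)) * (2 ^ β * r ^ β) * (ε + d - r) ^ (-(2 * σ)) := by
    have hlength : ε + d + r - (ε + d - r) = 2 * r := by ring
    rw [← Real.mul_rpow zero_le_two hr.le, ← hlength]
    simpa only [add_sub_cancel_left, sub_add_cancel_left] using
      rpow_mul_integral_rpow_neg_le (p := 1 + 2 * σ) (by linarith) hβ₁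
        (by linarith : 0 < ε + d - r) (by linarith : ε + d - r < ε + d + r)
  have hd₀ : 0 < d := hr.trans_le hd
  calc (ε + r) ^ β * ∫ s in Icc (d - r) (d + r), (ε ^ (1 + 2 * σ) + |s| ^ (1 + 2 * σ))⁻¹
      ≤ (ε + d + r) ^ β *
          ∫ s in Icc (d - r) (d + r), (ε ^ (1 + 2 * σ) + |s| ^ (1 + 2 * σ))⁻¹ := by
        gcongr
        exact le_add_of_nonneg_right hd₀.le
    _ ≤ (ε + d + r) ^ β *
          (2 ^ (2 * σ) * ∫ x in (ε + d - r)..(ε + d + r), x ^ (-(1 + 2 * σ))) := by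
        gcongr
    _ = 2 ^ (2 * σ) *
          ((ε + d + r) ^ β * ∫ x in (ε + d - r)..(ε + d + r), x ^ (-(1 + 2 * σ))) := by ring
    _ ≤ 2 ^ (2 * σ) * ((1 + 1 / (2 * σ)) * (2 ^ β * r ^ β) * (ε + d - r) ^ (-(2 * σ))) := by
        gcongr
    _ = 2 ^ (2 * σ + β) * (1 + 1 / (2 * σ)) * r ^ β * (ε + d - r) ^ (-(2 * σ)) := by
        rw [Real.rpow_add zero_lt_two]
        ring

/-- a one-dimensional integral estimate used for the barrier. -/
theorem statement16 (σ β₀ α : ℝ) (hσ : σ ∈ Set.Ioo (0 : ℝ) 1)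
    (hβ₀ : β₀ ∈ Set.Ioo (0 : ℝ) (min 1 (2 * σ))) (hα : α ∈ Set.Ioo (0 : ℝ) β₀) :
    ∃ C > (0 : ℝ), ∀ ε ∈ Set.Ioc (0 : ℝ) 1, ∀ r ∈ Set.Ioc (0 : ℝ) 1, ∀ d : ℝ, r < d →
      (ε + r) ^ β₀ * ∫ s in Set.Icc (d - r) (d + r), (ε ^ (1 + 2 * σ) + |s| ^ (1 + 2 * σ))⁻¹ ≤
        C * r ^ α * (ε + d - r) ^ (-(2 * σ)) := by
  have hσ₀ : 0 < σ := hσ.1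
  refine ⟨2 ^ (2 * σ + β₀) * (1 + 1 / (2 * σ)), by positivity, fun ε hε r hr d hd ↦ ?_⟩
  have hbase : 0 ≤ ε + d - r := by linarith [hε.1]
  have hrpow : r ^ β₀ ≤ r ^ α := Real.rpow_le_rpow_of_exponent_ge hr.1 hr.2 hα.2.le
  refine (statement16_general hσ₀ hβ₀.1.le (lt_min_iff.1 hβ₀.2).1.le hε.1 hr.1 hd.le).trans ?_
  gcongr
end
end
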